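/- Let K be a field of characteristic zero, let d ≥ 2 be an integer, and let T : K[y] → K[y] be the K-linear operator defined on the monomial basis by T(y^n) := 0 if n ≢ d−1 (mod d) and T(y^{kd+d−1}) := (y^d + y)^k for k ≥ 0. Then T satisfies the recurrence T(y^n) = (y^d + y)·T(y^{n−d}) for all n ≥ d, as well as deg T(f) < deg f for every nonzero f; and its nilpotence index satisfies N_T(y^{kd+d−1}) = ⌊k/(d−1)⌋ + 1 for every k ≥ 0. In particular, limsup_{n→∞} (log N_T(y^n))/(log n) = 1. -/

import Mathlib

open Polynomial

/-- The nilpotence index of `f` with respect to `T`: the largest `k` with `T^k f ≠ 0`. -/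
noncomputable def nilpIndex {K : Type} [CommRing K]
    (T : Module.End K (Polynomial K)) (f : Polynomial K) : ℕ :=
  sSup {k : ℕ | (T ^ k) f ≠ 0}

namespace DegreeLowering

variable {K : Type} [Field K] {d : ℕ} {T : Module.End K (Polynomial K)}

theorem eq_mul_add_sub_one_of_mod (hd : 2 ≤ d) {n : ℕ} (h : n % d = d - 1) :
    n = n / d * d + d - 1 := by
  have h1 := Nat.div_add_mod n d
  rw [h, mul_comm] at h1
  omega

theorem recurrence (hd : 2 ≤ d)
    (hT0 : ∀ n : ℕ, n % d ≠ d - 1 → T ((X : Polynomial K) ^ n) = 0)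
    (hT1 : ∀ k : ℕ, T ((X : Polynomial K) ^ (k * d + d - 1)) =
      ((X : Polynomial K) ^ d + X) ^ k) {n : ℕ} (hn : d ≤ n) :
    T ((X : Polynomial K) ^ n) = ((X : Polynomial K) ^ d + X) * T (X ^ (n - d)) := by
  obtain ⟨m, rfl⟩ := Nat.exists_eq_add_of_le' hn
  rw [Nat.add_sub_cancel]
  by_cases h : m % d = d - 1
  · have hm := eq_mul_add_sub_one_of_mod hd h
    have hmd : m + d = (m / d + 1) * d + d - 1 := by
      rw [add_mul, one_mul]
      omega
    rw [hmd, hT1]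
    conv_rhs => rw [hm, hT1]
    rw [pow_succ']
  · rw [hT0 m h, hT0 _ (by rwa [Nat.add_mod_right]), mul_zero]

theorem natDegree_X_pow_add_X_pow_le (hd : 2 ≤ d) (k : ℕ) :
    (((X : Polynomial K) ^ d + X) ^ k).natDegree ≤ k * d := by
  refine natDegree_pow_le_of_le k ?_
  refine natDegree_add_le_of_degree_le (natDegree_X_pow_le d) (natDegree_X_le.trans (by omega))

theorem degree_map_X_pow_lt (hd : 2 ≤ d)
    (hT0 : ∀ n : ℕ, n % d ≠ d - 1 → T ((X : Polynomial K) ^ n) = 0)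
    (hT1 : ∀ k : ℕ, T ((X : Polynomial K) ^ (k * d + d - 1)) =
      ((X : Polynomial K) ^ d + X) ^ k) (n : ℕ) :
    (T ((X : Polynomial K) ^ n)).degree < n := by
  by_cases h : n % d = d - 1
  · have hn := eq_mul_add_sub_one_of_mod hd h
    rw [hn, hT1]
    refine degree_le_natDegree.trans_lt ?_
    have := natDegree_X_pow_add_X_pow_le (K := K) hd (n / d)
    exact_mod_cast (by omega)
  · rw [hT0 n h, degree_zero]
    exact WithBot.bot_lt_coe n

theorem degree_map_lt_of_degree_map_X_pow_lt
    (hT : ∀ n : ℕ, (T ((X : Polynomial K) ^ n)).degree < n)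
    {f : Polynomial K} (hf : f ≠ 0) : (T f).degree < f.degree := by
  rw [degree_eq_natDegree hf, ← mem_degreeLT]
  have hsum := congrArg T f.as_sum_range_C_mul_X_pow
  rw [map_sum] at hsum
  rw [hsum]
  refine Submodule.sum_mem _ fun i hi => ?_
  rw [← smul_eq_C_mul, map_smul]
  refine Submodule.smul_mem _ _ (mem_degreeLT.2 ((hT i).trans_le ?_))
  have := Finset.mem_range.1 hi
  exact_mod_cast (by omega)

/-- The exponents congruent to `d - 1` modulo `d` occurring in `(X ^ d + X) ^ k`. -/
theorem exists_drop_of_exponent_eq (hd : 2 ≤ d) {k j l : ℕ} (hj : j ≤ k)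
    (h : d * j + (k - j) = l * d + d - 1) :
    ∃ i, 1 ≤ i ∧ k = l + (d - 1) * i ∧ j + d * i = k + 1 := by
  obtain ⟨e, rfl⟩ : ∃ e, d = e + 2 := ⟨d - 2, by omega⟩
  obtain ⟨c, rfl⟩ := Nat.exists_eq_add_of_le hj
  have h' : (e + 2) * j + c = l * (e + 2) + e + 1 := by omega
  have hlt : j < l + 1 := by
    by_contra hcon
    obtain ⟨b, rfl⟩ := Nat.exists_eq_add_of_le (not_lt.1 hcon)
    nlinarith
  obtain ⟨i, rfl⟩ := Nat.exists_eq_add_of_le (Nat.lt_succ_iff.1 hlt)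
  refine ⟨i + 1, by omega, ?_, ?_⟩
  · simp only [Nat.add_succ_sub_one]
    nlinarith
  · nlinarith

theorem pow_succ_map_X_pow
    (hT1 : ∀ k : ℕ, T ((X : Polynomial K) ^ (k * d + d - 1)) =
      ((X : Polynomial K) ^ d + X) ^ k) (k m : ℕ) :
    (T ^ (m + 1)) ((X : Polynomial K) ^ (k * d + d - 1)) =
      ∑ j ∈ Finset.range (k + 1), (k.choose j : K) • (T ^ m) (X ^ (d * j + (k - j))) := by
  rw [pow_succ, Module.End.mul_apply, hT1, add_pow, map_sum]
  refine Finset.sum_congr rfl fun j _ => ?_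
  rw [← pow_mul, ← pow_add, ← map_smul, smul_eq_C_mul, mul_comm, map_natCast]

theorem pow_map_X_pow_eq_zero (hd : 2 ≤ d)
    (hT0 : ∀ n : ℕ, n % d ≠ d - 1 → T ((X : Polynomial K) ^ n) = 0)
    (hT1 : ∀ k : ℕ, T ((X : Polynomial K) ^ (k * d + d - 1)) =
      ((X : Polynomial K) ^ d + X) ^ k) (m : ℕ) :
    ∀ k : ℕ, k < (d - 1) * m → (T ^ (m + 1)) ((X : Polynomial K) ^ (k * d + d - 1)) = 0 := by
  induction m with
  | zero => intro k hk; simp at hk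
  | succ m ih =>
    intro k hk
    rw [pow_succ_map_X_pow hT1]
    refine Finset.sum_eq_zero fun j hj => ?_
    have hj : j ≤ k := Nat.lt_succ_iff.1 (Finset.mem_range.1 hj)
    by_cases h : (d * j + (k - j)) % d = d - 1
    · have hn := eq_mul_add_sub_one_of_mod hd h
      obtain ⟨i, hi, hk', -⟩ := exists_drop_of_exponent_eq hd hj hn
      have : d - 1 ≤ (d - 1) * i := Nat.le_mul_of_pos_right _ hi
      rw [hn, ih _ (by rw [mul_add, mul_one] at hk; omega), smul_zero]
    · rw [pow_succ, Module.End.mul_apply, hT0 _ h, map_zero, smul_zero]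

theorem pow_map_X_pow_ne_zero [CharZero K] (hd : 2 ≤ d)
    (hT0 : ∀ n : ℕ, n % d ≠ d - 1 → T ((X : Polynomial K) ^ n) = 0)
    (hT1 : ∀ k : ℕ, T ((X : Polynomial K) ^ (k * d + d - 1)) =
      ((X : Polynomial K) ^ d + X) ^ k) (m : ℕ) :
    ∀ r : ℕ, r < d - 1 →
      (T ^ (m + 1)) ((X : Polynomial K) ^ ((r + (d - 1) * m) * d + d - 1)) ≠ 0 := by
  induction m with
  | zero =>
    intro r _
    rw [zero_add, pow_one, mul_zero, add_zero, hT1]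
    refine pow_ne_zero _ fun h => ?_
    have := congrArg (fun p => coeff p 1) h
    simp [coeff_X_pow, show ¬ (1 = d) by omega] at this
  | succ m ih =>
    intro r hr
    set k := r + (d - 1) * (m + 1) with hk
    have hkl : k = r + (d - 1) * m + (d - 1) := by rw [hk]; ring
    have hsum : (T ^ (m + 1 + 1)) ((X : Polynomial K) ^ (k * d + d - 1)) =
        (k.choose (k + 1 - d) : K) •
          (T ^ (m + 1)) (X ^ ((r + (d - 1) * m) * d + d - 1)) := by
      rw [pow_succ_map_X_pow hT1, Finset.sum_eq_single (k + 1 - d)]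
      · congr 3
        obtain ⟨e, rfl⟩ : ∃ e, d = e + 1 := ⟨d - 1, by omega⟩
        simp only [Nat.add_sub_cancel] at *
        rw [show k + 1 - (e + 1) = r + e * m by omega,
          show k - (r + e * m) = e by omega]
        rw [← Nat.add_assoc, Nat.add_sub_cancel, mul_comm]
      · intro j hj hne
        have hj : j ≤ k := Nat.lt_succ_iff.1 (Finset.mem_range.1 hj)
        by_cases h : (d * j + (k - j)) % d = d - 1
        · have hn := eq_mul_add_sub_one_of_mod hd h
          obtain ⟨i, hi, hk', hji⟩ := exists_drop_of_exponent_eq hd hj hn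
          have hi2 : 2 ≤ i := by
            rcases hi.eq_or_lt with rfl | hi'
            · exact absurd (by omega) hne
            · exact hi'
          have : (d - 1) * 2 ≤ (d - 1) * i := Nat.mul_le_mul_left _ hi2
          rw [hn, pow_map_X_pow_eq_zero hd hT0 hT1 _ _ (by omega), smul_zero]
        · rw [pow_succ, Module.End.mul_apply, hT0 _ h, map_zero, smul_zero]
      · intro h
        exact absurd (Finset.mem_range.2 (by omega)) h
    rw [hsum]
    refine smul_ne_zero ?_ (ih r hr)
    exact_mod_cast (Nat.choose_pos (by omega)).ne'

theorem nilpIndex_eq {f : Polynomial K} {m : ℕ} (h : (T ^ m) f ≠ 0)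
    (h' : (T ^ (m + 1)) f = 0) : nilpIndex T f = m := by
  refine IsGreatest.csSup_eq ⟨h, fun k hk => ?_⟩
  by_contra hlt
  obtain ⟨c, rfl⟩ := Nat.exists_eq_add_of_le' (Nat.succ_le_of_lt (not_le.1 hlt))
  exact hk (by rw [pow_add, Module.End.mul_apply, h', map_zero])

theorem nilpIndex_X_pow_eq [CharZero K] (hd : 2 ≤ d)
    (hT0 : ∀ n : ℕ, n % d ≠ d - 1 → T ((X : Polynomial K) ^ n) = 0)
    (hT1 : ∀ k : ℕ, T ((X : Polynomial K) ^ (k * d + d - 1)) =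
      ((X : Polynomial K) ^ d + X) ^ k) (k : ℕ) :
    nilpIndex T ((X : Polynomial K) ^ (k * d + d - 1)) = k / (d - 1) + 1 := by
  have hmod : k % (d - 1) < d - 1 := Nat.mod_lt _ (by omega)
  have hdm := Nat.mod_add_div k (d - 1)
  refine nilpIndex_eq ?_ (pow_map_X_pow_eq_zero hd hT0 hT1 _ _ ?_)
  · have := pow_map_X_pow_ne_zero hd hT0 hT1 (k / (d - 1)) _ hmod
    rwa [hdm] at this
  · rw [mul_add, mul_one]
    omega

theorem limsup_eq_of_eventually_le_of_tendsto_comp {u : ℕ → ℝ} {φ : ℕ → ℕ} {a b : ℝ}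
    (hφ : Filter.Tendsto φ Filter.atTop Filter.atTop)
    (hle : ∀ᶠ n in Filter.atTop, u n ≤ a) (hge : ∀ᶠ n in Filter.atTop, b ≤ u n)
    (hu : Filter.Tendsto (u ∘ φ) Filter.atTop (nhds a)) :
    Filter.limsup u Filter.atTop = a := by
  have hbdd : Filter.IsBoundedUnder (· ≤ ·) Filter.atTop u := ⟨a, hle⟩
  have hcob : Filter.IsCoboundedUnder (· ≤ ·) Filter.atTop u :=
    Filter.IsBoundedUnder.isCoboundedUnder_le ⟨b, hge⟩
  refine le_antisymm (Filter.limsup_le_of_le hcob hle) ?_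
  refine le_of_forall_lt fun c hc => ?_
  obtain ⟨c', hcc', hc'⟩ := exists_between hc
  refine hcc'.trans_le (Filter.le_limsup_of_frequently_le ?_ hbdd)
  exact hφ.frequently ((hu.eventually (eventually_ge_nhds hc')).frequently)

theorem tendsto_log_div_log_mul_add {a b : ℝ} (ha : 0 < a) (hb : 0 < b) :
    Filter.Tendsto (fun m : ℕ => Real.log ((m : ℝ) + 1) / Real.log (a * m + b))
      Filter.atTop (nhds 1) := by
  have hm : Filter.Tendsto (fun m : ℕ => (m : ℝ) + 1) Filter.atTop Filter.atTop :=
    Filter.tendsto_atTop_add_const_right _ _ tendsto_natCast_atTop_atTop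
  have hlog := Real.tendsto_log_atTop.comp hm
  have hquot : Filter.Tendsto (fun m : ℕ => (a * m + b) / ((m : ℝ) + 1))
      Filter.atTop (nhds a) := by
    have h0 : Filter.Tendsto (fun m : ℕ => a + (b - a) / ((m : ℝ) + 1))
        Filter.atTop (nhds (a + 0)) := tendsto_const_nhds.add (hm.const_div_atTop _)
    rw [add_zero] at h0
    refine h0.congr fun m => ?_
    field_simp
    ring
  have hratio : Filter.Tendsto (fun m : ℕ => 1 + Real.log ((a * m + b) / ((m : ℝ) + 1)) /
      Real.log ((m : ℝ) + 1)) Filter.atTop (nhds (1 + 0)) :=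
    tendsto_const_nhds.add ((hquot.log ha.ne').div_atTop hlog)
  rw [add_zero] at hratio
  have hinv := hratio.inv₀ one_ne_zero
  rw [inv_one] at hinv
  refine hinv.congr' ?_
  filter_upwards [hlog.eventually_gt_atTop 0] with m hm0
  have hm0 : 0 < Real.log ((m : ℝ) + 1) := hm0
  rw [Real.log_div (by positivity) (by positivity), sub_div, div_self hm0.ne',
    add_sub_cancel, inv_div]

theorem limsup_log_nilpIndex [CharZero K] (hd : 2 ≤ d)
    (hT0 : ∀ n : ℕ, n % d ≠ d - 1 → T ((X : Polynomial K) ^ n) = 0)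
    (hT1 : ∀ k : ℕ, T ((X : Polynomial K) ^ (k * d + d - 1)) =
      ((X : Polynomial K) ^ d + X) ^ k) :
    Filter.limsup
      (fun n : ℕ => Real.log (nilpIndex T ((X : Polynomial K) ^ n) : ℝ) / Real.log (n : ℝ))
      Filter.atTop = 1 := by
  have hbound : ∀ n : ℕ, nilpIndex T ((X : Polynomial K) ^ n) ≤ n := by
    intro n
    by_cases h : n % d = d - 1
    · have hn := eq_mul_add_sub_one_of_mod hd h
      have h1 : n / d / (d - 1) ≤ n / d := Nat.div_le_self _ _
      have h2 : n / d ≤ n / d * d := Nat.le_mul_of_pos_right _ (by omega)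
      have h3 := nilpIndex_X_pow_eq hd hT0 hT1 (n / d)
      rw [← hn] at h3
      omega
    · rw [nilpIndex_eq (m := 0) (by simp) (by simpa using hT0 n h)]
      exact Nat.zero_le n
  refine limsup_eq_of_eventually_le_of_tendsto_comp
    (φ := fun m => (d - 1) * m * d + d - 1) (b := 0) ?_ ?_ ?_ ?_
  · refine Filter.tendsto_atTop_mono (fun m => ?_) Filter.tendsto_id
    have h1 : m ≤ (d - 1) * m := Nat.le_mul_of_pos_left _ (by omega)
    have h2 : (d - 1) * m ≤ (d - 1) * m * d := Nat.le_mul_of_pos_right _ (by omega)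
    simp only [id]
    omega
  · refine Filter.Eventually.of_forall fun n => div_le_one_of_le₀ ?_ (Real.log_natCast_nonneg n)
    rcases Nat.eq_zero_or_pos (nilpIndex T ((X : Polynomial K) ^ n)) with h | h
    · rw [h, Nat.cast_zero, Real.log_zero]
      exact Real.log_natCast_nonneg n
    · exact Real.log_le_log (by exact_mod_cast h) (by exact_mod_cast hbound n)
  · exact Filter.Eventually.of_forall fun n =>
      div_nonneg (Real.log_natCast_nonneg _) (Real.log_natCast_nonneg _)
  · have hd1 : (0 : ℝ) < (d : ℝ) - 1 := by
      have : (2 : ℝ) ≤ d := by exact_mod_cast hd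
      linarith
    refine (tendsto_log_div_log_mul_add (a := ((d : ℝ) - 1) * d) (b := (d : ℝ) - 1)
      (by positivity) hd1).congr fun m => ?_
    simp only [Function.comp]
    rw [nilpIndex_X_pow_eq hd hT0 hT1, Nat.mul_div_cancel_left _ (by omega),
      Nat.add_sub_assoc (by omega)]
    push_cast [Nat.cast_sub (show 1 ≤ d by omega)]
    congr 2
    ring

end DegreeLowering

/-- A characteristic-zero example with linear nilpotence-index growth. -/
theorem stmt19 {K : Type} [Field K] [CharZero K] (d : ℕ) (hd : 2 ≤ d)
    (T : Module.End K (Polynomial K))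
    (hT0 : ∀ n : ℕ, n % d ≠ d - 1 → T ((X : Polynomial K) ^ n) = 0)
    (hT1 : ∀ k : ℕ, T ((X : Polynomial K) ^ (k * d + d - 1)) =
      ((X : Polynomial K) ^ d + X) ^ k) :
    (∀ n : ℕ, d ≤ n →
      T ((X : Polynomial K) ^ n) = ((X : Polynomial K) ^ d + X) * T (X ^ (n - d))) ∧
    (∀ f : Polynomial K, f ≠ 0 → (T f).degree < f.degree) ∧
    (∀ k : ℕ, nilpIndex T ((X : Polynomial K) ^ (k * d + d - 1)) = k / (d - 1) + 1) ∧
    Filter.limsup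
      (fun n : ℕ => Real.log (nilpIndex T ((X : Polynomial K) ^ n) : ℝ) / Real.log (n : ℝ))
      Filter.atTop = 1 := by
  exact ⟨fun n hn => DegreeLowering.recurrence hd hT0 hT1 hn,
    fun f hf => DegreeLowering.degree_map_lt_of_degree_map_X_pow_lt
      (DegreeLowering.degree_map_X_pow_lt hd hT0 hT1) hf,
    DegreeLowering.nilpIndex_X_pow_eq hd hT0 hT1,
    DegreeLowering.limsup_log_nilpIndex hd hT0 hT1⟩
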